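/- arXiv:2412.07469 — 7 statements merged into one kernel-verified Lean document; each statement's English description precedes it below -/
import Mathlib

section
/- Let l : Fin d and suppose that for every j : Fin d the function f j does not depend on coordinate l. Then for every x : Fin d → ℝ, the partial derivative of log p at x along the l-th coordinate equals -(x l - f l x) / (σ l)^2. (This is the computation of the score of a leaf node in an additive Gaussian noise structural equation model, equation (13) of the paper.) -/
open Real MeasureTheory

/-- Score of a leaf node in an additive Gaussian noise SEM (equation (13)):
if no structural function depends on coordinate `l` (i.e. `l` is a leaf), then the
partial derivative of `log p` along the `l`-th coordinate is `-(x l - f l x) / (σ l)^2`. -/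
theorem leaf_score
    (d : ℕ) (σ : Fin d → ℝ) (hσ : ∀ j, 0 < σ j)
    (f : Fin d → (Fin d → ℝ) → ℝ) (hf : ∀ j, Differentiable ℝ (f j))
    (p : (Fin d → ℝ) → ℝ)
    (hp : ∀ x, p x = ∏ j, (σ j * Real.sqrt (2 * π))⁻¹ *
      Real.exp (-(x j - f j x) ^ 2 / (2 * (σ j) ^ 2)))
    (l : Fin d)
    (hleaf : ∀ (j : Fin d) (x : Fin d → ℝ) (t : ℝ), f j x = f j (Function.update x l t)) :
    ∀ x : Fin d → ℝ,
      deriv (fun t => Real.log (p (Function.update x l t))) (x l)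
        = -(x l - f l x) / (σ l) ^ 2 := by
  intro x
  have hs : ∀ j, 0 < (σ j * Real.sqrt (2 * π))⁻¹ := fun j => by
    have := hσ j
    positivity
  have key : (fun t => Real.log (p (Function.update x l t))) = fun t =>
      (-(t - f l x) ^ 2 / (2 * (σ l) ^ 2)) +
      (Real.log ((σ l * Real.sqrt (2 * π))⁻¹) +
      ∑ j ∈ Finset.univ.erase l, (Real.log ((σ j * Real.sqrt (2 * π))⁻¹) +
        (-(x j - f j x) ^ 2 / (2 * (σ j) ^ 2)))) := by
    funext t
    rw [hp, Real.log_prod (fun j _ => (mul_pos (hs j) (Real.exp_pos _)).ne')]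
    have h1 : ∀ j, Real.log ((σ j * Real.sqrt (2 * π))⁻¹ *
        Real.exp (-(Function.update x l t j - f j (Function.update x l t)) ^ 2 /
          (2 * (σ j) ^ 2))) = Real.log ((σ j * Real.sqrt (2 * π))⁻¹) +
        (-(Function.update x l t j - f j x) ^ 2 / (2 * (σ j) ^ 2)) := by
      intro j
      rw [Real.log_mul (hs j).ne' (Real.exp_pos _).ne', Real.log_exp, ← hleaf j x t]
    rw [Finset.sum_congr rfl (fun j _ => h1 j),
      ← Finset.add_sum_erase _ _ (Finset.mem_univ l), Function.update_self]
    have h2 : ∑ j ∈ Finset.univ.erase l, (Real.log ((σ j * Real.sqrt (2 * π))⁻¹) +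
        (-(Function.update x l t j - f j x) ^ 2 / (2 * (σ j) ^ 2))) =
        ∑ j ∈ Finset.univ.erase l, (Real.log ((σ j * Real.sqrt (2 * π))⁻¹) +
        (-(x j - f j x) ^ 2 / (2 * (σ j) ^ 2))) := by
      refine Finset.sum_congr rfl (fun j hj => ?_)
      rw [Function.update_of_ne (Finset.ne_of_mem_erase hj)]
    rw [h2]
    ring
  rw [key]
  have hd := (((((hasDerivAt_id (x l)).sub_const (f l x)).pow 2).neg).div_const
    (2 * (σ l) ^ 2)).add_const (Real.log ((σ l * Real.sqrt (2 * π))⁻¹) +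
      ∑ j ∈ Finset.univ.erase l, (Real.log ((σ j * Real.sqrt (2 * π))⁻¹) +
        (-(x j - f j x) ^ 2 / (2 * (σ j) ^ 2))))
  refine HasDerivAt.deriv (hd.congr_deriv ?_)
  have := (hσ l).ne'
  simp only [id]
  field_simp
  norm_num
  ring
end

section
/- Let l : Fin d and suppose that for every j : Fin d the function f j does not depend on coordinate l. Then for every x : Fin d → ℝ, the second partial derivative of log p at x along the l-th coordinate (the l-th diagonal entry of the Hessian of log p) equals -1/(σ l)^2; in particular it is constant in x, so its variance under any distribution of x is zero. (Forward direction of Lemma 1(i): for a leaf node the diagonal Hessian entry of the log-density is constant.) -/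
open Real MeasureTheory

/-- Forward direction of Lemma 1(i): for a leaf node `l` (no structural function depends
on coordinate `l`), the `l`-th diagonal entry of the Hessian of `log p` is the constant
`-1/(σ l)^2`. -/
theorem leaf_hessian_constant
    (d : ℕ) (σ : Fin d → ℝ) (hσ : ∀ j, 0 < σ j)
    (f : Fin d → (Fin d → ℝ) → ℝ) (hf : ∀ j, Differentiable ℝ (f j))
    (p : (Fin d → ℝ) → ℝ)
    (hp : ∀ x, p x = ∏ j, (σ j * Real.sqrt (2 * π))⁻¹ *
      Real.exp (-(x j - f j x) ^ 2 / (2 * (σ j) ^ 2)))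
    (l : Fin d)
    (hleaf : ∀ (j : Fin d) (x : Fin d → ℝ) (t : ℝ), f j x = f j (Function.update x l t)) :
    ∀ x : Fin d → ℝ,
      deriv (deriv (fun t => Real.log (p (Function.update x l t)))) (x l)
        = -1 / (σ l) ^ 2 := by
  intro x
  have hl := hσ l
  have key : ∃ C : ℝ, (fun t => Real.log (p (Function.update x l t)))
      = fun t => -(t - f l x) ^ 2 / (2 * (σ l) ^ 2) + C := by
    refine ⟨Real.log ((σ l * Real.sqrt (2 * π))⁻¹) +
      ∑ j ∈ Finset.univ.erase l, Real.log ((σ j * Real.sqrt (2 * π))⁻¹ *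
      Real.exp (-(x j - f j x) ^ 2 / (2 * (σ j) ^ 2))), ?_⟩
    funext t
    have hc : ∀ j, (σ j * Real.sqrt (2 * π))⁻¹ ≠ 0 := by
      intro j
      have := hσ j
      positivity
    rw [hp, Real.log_prod (fun j _ => mul_ne_zero (hc j) (Real.exp_ne_zero _)),
      ← Finset.add_sum_erase _ _ (Finset.mem_univ l)]
    have hs : ∀ j ∈ Finset.univ.erase l, Real.log ((σ j * Real.sqrt (2 * π))⁻¹ *
        Real.exp (-(Function.update x l t j - f j (Function.update x l t)) ^ 2 /
          (2 * (σ j) ^ 2))) = Real.log ((σ j * Real.sqrt (2 * π))⁻¹ *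
        Real.exp (-(x j - f j x) ^ 2 / (2 * (σ j) ^ 2))) := by
      intro j hj
      rw [← hleaf j x t, Function.update_of_ne (Finset.ne_of_mem_erase hj)]
    rw [Finset.sum_congr rfl hs, ← hleaf l x t, Function.update_self,
      Real.log_mul (hc l) (Real.exp_ne_zero _), Real.log_exp]
    ring
  obtain ⟨C, hC⟩ := key
  have h1 : deriv (fun t => Real.log (p (Function.update x l t)))
      = fun t => -(t - f l x) / (σ l) ^ 2 := by
    rw [hC]
    funext t
    have h := (((((hasDerivAt_id t).sub_const (f l x)).pow 2).neg).div_const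
      (2 * (σ l) ^ 2)).add_const C
    refine HasDerivAt.deriv (h.congr_deriv ?_)
    simp
    field_simp
    ring
  rw [h1]
  have h := (((hasDerivAt_id (x l)).sub_const (f l x)).neg).div_const ((σ l) ^ 2)
  exact h.deriv
end

section
/- For every index i : Fin d and every x : Fin d → ℝ, the partial derivative of log p at x along the i-th coordinate equals -(x i - f i x)/(σ i)^2 + ∑_{j : Fin d} ((x j - f j x)/(σ j)^2) · (∂_i f j)(x), where ∂_i f j denotes the partial derivative of f j along the i-th coordinate. (Score decomposition for a general node, equation (14) of the paper.) -/
open Real MeasureTheory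

/-- Score decomposition for a general node (equation (14)):
`∂_i log p (x) = -(x i - f i x)/(σ i)^2 + ∑ j ((x j - f j x)/(σ j)^2) ⬝ ∂_i f j (x)`. -/
theorem score_decomposition
    (d : ℕ) (σ : Fin d → ℝ) (hσ : ∀ j, 0 < σ j)
    (f : Fin d → (Fin d → ℝ) → ℝ) (hf : ∀ j, Differentiable ℝ (f j))
    (p : (Fin d → ℝ) → ℝ)
    (hp : ∀ x, p x = ∏ j, (σ j * Real.sqrt (2 * π))⁻¹ *
      Real.exp (-(x j - f j x) ^ 2 / (2 * (σ j) ^ 2))) :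
    ∀ (i : Fin d) (x : Fin d → ℝ),
      deriv (fun t => Real.log (p (Function.update x i t))) (x i)
        = -(x i - f i x) / (σ i) ^ 2
          + ∑ j, ((x j - f j x) / (σ j) ^ 2) *
              deriv (fun t => f j (Function.update x i t)) (x i) := by
  intro i x
  have hlog : ∀ y, Real.log (p y) = ∑ j, (Real.log ((σ j * Real.sqrt (2 * π))⁻¹) +
      (-(y j - f j y) ^ 2 / (2 * (σ j) ^ 2))) := by
    intro y
    have hc : ∀ j, (σ j * Real.sqrt (2 * π))⁻¹ ≠ 0 := by
      intro j
      have h1 := hσ j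
      positivity
    rw [hp, Real.log_prod (fun j _ => mul_ne_zero (hc j) (Real.exp_ne_zero _))]
    refine Finset.sum_congr rfl fun j _ => ?_
    rw [Real.log_mul (hc j) (Real.exp_ne_zero _), Real.log_exp]
  have hupd : ∀ j, HasDerivAt (fun t => Function.update x i t j)
      ((Pi.single i (1 : ℝ) : Fin d → ℝ) j) (x i) := fun j =>
    hasDerivAt_pi.1 (hasDerivAt_update x i (x i)) j
  have hfd : ∀ j, HasDerivAt (fun t => f j (Function.update x i t))
      (deriv (fun t => f j (Function.update x i t)) (x i)) (x i) := fun j =>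
    (DifferentiableAt.comp (x i) (hf j _)
      (hasDerivAt_update x i (x i)).differentiableAt).hasDerivAt
  have key : HasDerivAt (fun t => Real.log (p (Function.update x i t)))
      (∑ j, (-(x j - f j x) / (σ j) ^ 2 * (Pi.single i (1 : ℝ) : Fin d → ℝ) j
        + ((x j - f j x) / (σ j) ^ 2) *
          deriv (fun t => f j (Function.update x i t)) (x i))) (x i) := by
    simp only [hlog]
    refine HasDerivAt.fun_sum fun j _ => ?_
    have h := (((((hupd j).sub (hfd j)).fun_pow 2).fun_neg).div_const
      (2 * (σ j) ^ 2)).const_add (Real.log ((σ j * Real.sqrt (2 * π))⁻¹))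
    refine h.congr_deriv ?_
    have h1 := (hσ j).ne'
    simp only [Pi.sub_apply, Function.update_eq_self]
    field_simp
    push_cast
    ring
  rw [key.deriv, Finset.sum_add_distrib]
  congr 1
  rw [Finset.sum_eq_single i]
  · simp
  · intro j _ hj
    simp [Pi.single_eq_of_ne hj]
  · simp
end

section
/- Assume in addition that each f j is twice differentiable. Then for every index i : Fin d and every x : Fin d → ℝ, the second partial derivative of log p at x along the i-th coordinate equals ∑_{j : Fin d} [ ((x j - f j x)/(σ j)^2) · (∂²_i f j)(x) − (δ_{i j} − (∂_i f j)(x))^2 / (σ j)^2 ], where δ_{i j} = 1 if i = j and 0 otherwise, ∂_i denotes the partial derivative along the i-th coordinate, and ∂²_i the second partial derivative along the i-th coordinate. (Diagonal Hessian entry of the log-density for a general node, used in the proof of Lemma 1.) -/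
open Real MeasureTheory

/-- Diagonal Hessian entry of the log-density for a general node (used in the proof of
Lemma 1): for twice differentiable structural functions,
`∂²_i log p (x) = ∑ j [ ((x j - f j x)/(σ j)^2) ⬝ ∂²_i f j (x)
                      − (δ_{i j} − ∂_i f j (x))^2 / (σ j)^2 ]`. -/
theorem hessian_diagonal_decomposition
    (d : ℕ) (σ : Fin d → ℝ) (hσ : ∀ j, 0 < σ j)
    (f : Fin d → (Fin d → ℝ) → ℝ) (hf : ∀ j, ContDiff ℝ 2 (f j))
    (p : (Fin d → ℝ) → ℝ)
    (hp : ∀ x, p x = ∏ j, (σ j * Real.sqrt (2 * π))⁻¹ *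
      Real.exp (-(x j - f j x) ^ 2 / (2 * (σ j) ^ 2))) :
    ∀ (i : Fin d) (x : Fin d → ℝ),
      deriv (deriv (fun t => Real.log (p (Function.update x i t)))) (x i)
        = ∑ j, (((x j - f j x) / (σ j) ^ 2) *
                  deriv (deriv (fun t => f j (Function.update x i t))) (x i)
                - ((if i = j then (1 : ℝ) else 0)
                    - deriv (fun t => f j (Function.update x i t)) (x i)) ^ 2 / (σ j) ^ 2) := by
  intro i x
  have hg : ∀ j, ContDiff ℝ 2 (fun t => f j (Function.update x i t)) := fun j =>
    (hf j).comp (contDiff_update 2 x i)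
  have hg1 : ∀ j t, HasDerivAt (fun t => f j (Function.update x i t))
      (deriv (fun t => f j (Function.update x i t)) t) t := fun j t =>
    (((hg j).differentiable (by norm_num)) t).hasDerivAt
  have hg2 : ∀ j t, HasDerivAt (deriv (fun t => f j (Function.update x i t)))
      (deriv (deriv (fun t => f j (Function.update x i t))) t) t := fun j t =>
    (((hg j).differentiable_deriv_two) t).hasDerivAt
  have hu : ∀ j t, HasDerivAt (fun t => Function.update x i t j)
      (if i = j then (1 : ℝ) else 0) t := by
    intro j t
    by_cases h : i = j
    · subst h
      simpa using hasDerivAt_id' t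
    · have h' : j ≠ i := fun e => h e.symm
      simpa [h, h'] using hasDerivAt_const t (x j)
  have hlog : (fun t => Real.log (p (Function.update x i t))) = fun t =>
      ∑ j, (Real.log ((σ j * Real.sqrt (2 * π))⁻¹) +
        -(Function.update x i t j - f j (Function.update x i t)) ^ 2 / (2 * (σ j) ^ 2)) := by
    funext t
    have hc : ∀ j, (σ j * Real.sqrt (2 * π))⁻¹ ≠ 0 := by
      intro j
      have := hσ j
      positivity
    rw [hp, Real.log_prod (fun j _ => mul_ne_zero (hc j) (Real.exp_ne_zero _))]
    refine Finset.sum_congr rfl fun j _ => ?_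
    rw [Real.log_mul (hc j) (Real.exp_ne_zero _), Real.log_exp]
  have hd1 : deriv (fun t => Real.log (p (Function.update x i t))) = fun t =>
      ∑ j, -((Function.update x i t j - f j (Function.update x i t)) *
        ((if i = j then (1 : ℝ) else 0) - deriv (fun t => f j (Function.update x i t)) t)
          / (σ j) ^ 2) := by
    rw [hlog]
    funext t
    refine HasDerivAt.deriv (HasDerivAt.fun_sum fun j _ => ?_)
    have hs := (hσ j).ne'
    refine HasDerivAt.congr_deriv
      (((((hu j t).sub (hg1 j t)).pow 2).neg.div_const (2 * (σ j) ^ 2)).const_add _) ?_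
    simp only [Pi.sub_apply]
    field_simp
    norm_num
    ring
  rw [hd1]
  refine HasDerivAt.deriv (HasDerivAt.fun_sum fun j _ => ?_)
  have hs := (hσ j).ne'
  refine HasDerivAt.congr_deriv
    (((((hu j (x i)).sub (hg1 j (x i))).mul
      ((hg2 j (x i)).const_sub (if i = j then (1 : ℝ) else 0))).div_const ((σ j) ^ 2)).neg) ?_
  simp only [Pi.sub_apply, Function.update_eq_self]
  field_simp
  ring
end

section
/- Let l : Fin d and suppose that for every j : Fin d the function f j does not depend on coordinate l. Then for every x : Fin d → ℝ, ∫_ℝ p (Function.update x l t) dt = ∏_{j ≠ l} (σ j * Real.sqrt (2π))⁻¹ * Real.exp (-(x j - f j x)^2 / (2 (σ j)^2)); in particular, integrating out the leaf coordinate l yields the product density over the remaining nodes, which does not depend on x l. (Marginalization of a leaf node, used in the proofs of Theorem 2 and Corollary 1.) -/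
open Real MeasureTheory

/-- Marginalization of a leaf node (used in the proofs of Theorem 2 and Corollary 1):
integrating out the leaf coordinate `l` yields the product density over the remaining
nodes. -/
theorem leaf_marginalization
    (d : ℕ) (σ : Fin d → ℝ) (hσ : ∀ j, 0 < σ j)
    (f : Fin d → (Fin d → ℝ) → ℝ) (hf : ∀ j, Differentiable ℝ (f j))
    (p : (Fin d → ℝ) → ℝ)
    (hp : ∀ x, p x = ∏ j, (σ j * Real.sqrt (2 * π))⁻¹ *
      Real.exp (-(x j - f j x) ^ 2 / (2 * (σ j) ^ 2)))
    (l : Fin d)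
    (hleaf : ∀ (j : Fin d) (x : Fin d → ℝ) (t : ℝ), f j x = f j (Function.update x l t)) :
    ∀ x : Fin d → ℝ,
      ∫ t : ℝ, p (Function.update x l t)
        = ∏ j ∈ Finset.univ.erase l, (σ j * Real.sqrt (2 * π))⁻¹ *
            Real.exp (-(x j - f j x) ^ 2 / (2 * (σ j) ^ 2)) := by
  intro x
  obtain ⟨v, hv⟩ : ∃ v : NNReal, (v : ℝ) = (σ l) ^ 2 :=
    ⟨Real.toNNReal ((σ l) ^ 2), Real.coe_toNNReal _ (sq_nonneg _)⟩
  have key : ∀ t : ℝ, p (Function.update x l t) =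
      ProbabilityTheory.gaussianPDFReal (f l x) v t *
      ∏ j ∈ Finset.univ.erase l, (σ j * Real.sqrt (2 * π))⁻¹ *
            Real.exp (-(x j - f j x) ^ 2 / (2 * (σ j) ^ 2)) := by
    intro t
    rw [hp, ← Finset.mul_prod_erase Finset.univ _ (Finset.mem_univ l)]
    congr 1
    · have h : Real.sqrt (2 * π * (σ l) ^ 2) = σ l * Real.sqrt (2 * π) := by
        rw [Real.sqrt_mul (by positivity), Real.sqrt_sq (hσ l).le, mul_comm]
      rw [← hleaf l x t, Function.update_self, ProbabilityTheory.gaussianPDFReal,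
        hv, h]
    · refine Finset.prod_congr rfl fun j hj => ?_
      rw [← hleaf j x t, Function.update_of_ne (Finset.ne_of_mem_erase hj)]
  simp_rw [key]
  rw [integral_mul_const, ProbabilityTheory.integral_gaussianPDFReal_eq_one, one_mul]
  intro h
  have h2 : (σ l) ^ 2 = 0 := by rw [← hv, h, NNReal.coe_zero]
  exact (pow_pos (hσ l) 2).ne' h2
end

section
/- Let ρ : ℝ → ℝ be twice differentiable with ρ(x) > 0 for all x and ∫_ℝ ρ = 1, and let q : ℝ → ℝ be twice differentiable. Assume q(x)·ρ'(x) → 0 and q'(x)·ρ(x) → 0 as x → ±∞, and that q·ρ'', q'·ρ', q''·ρ and q·(ρ')²/ρ are Lebesgue integrable on ℝ. Then ∫_ℝ q(x)·(log ρ)''(x)·ρ(x) dx = ∫_ℝ q''(x)·ρ(x) dx − ∫_ℝ q(x)·((log ρ)'(x))²·ρ(x) dx. (One-dimensional second-order Stein identity, equation (5) of the paper, the basis of the Hessian-diagonal estimator.) -/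
open Real MeasureTheory Filter

/-- One-dimensional second-order Stein identity (equation (5) of the paper):
for a positive twice differentiable density `ρ` and a twice differentiable test function
`q` with `q·ρ' → 0` and `q'·ρ → 0` at `±∞` and suitable integrability,
`∫ q·(log ρ)''·ρ = ∫ q''·ρ − ∫ q·((log ρ)')²·ρ`. -/
theorem stein_identity_second_order
    (ρ q : ℝ → ℝ)
    (hρdiff : Differentiable ℝ ρ) (hρdiff2 : Differentiable ℝ (deriv ρ))
    (hρpos : ∀ x, 0 < ρ x) (hρint : (∫ x, ρ x) = 1)
    (hqdiff : Differentiable ℝ q) (hqdiff2 : Differentiable ℝ (deriv q))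
    (htop1 : Tendsto (fun x => q x * deriv ρ x) atTop (nhds 0))
    (hbot1 : Tendsto (fun x => q x * deriv ρ x) atBot (nhds 0))
    (htop2 : Tendsto (fun x => deriv q x * ρ x) atTop (nhds 0))
    (hbot2 : Tendsto (fun x => deriv q x * ρ x) atBot (nhds 0))
    (hint1 : Integrable (fun x => q x * deriv (deriv ρ) x))
    (hint2 : Integrable (fun x => deriv q x * deriv ρ x))
    (hint3 : Integrable (fun x => deriv (deriv q) x * ρ x))
    (hint4 : Integrable (fun x => q x * (deriv ρ x) ^ 2 / ρ x)) :
    ∫ x, q x * deriv (deriv (fun y => Real.log (ρ y))) x * ρ x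
      = (∫ x, deriv (deriv q) x * ρ x)
        - ∫ x, q x * (deriv (fun y => Real.log (ρ y)) x) ^ 2 * ρ x := by
  have hlog : deriv (fun y => Real.log (ρ y)) = fun x => deriv ρ x / ρ x := by
    funext x
    exact ((hρdiff x).hasDerivAt.log (hρpos x).ne').deriv
  have hlog2 : ∀ x, deriv (fun x => deriv ρ x / ρ x) x
      = (deriv (deriv ρ) x * ρ x - deriv ρ x * deriv ρ x) / ρ x ^ 2 := fun x =>
    ((hρdiff2 x).hasDerivAt.div (hρdiff x).hasDerivAt (hρpos x).ne').deriv
  have key : ∫ x, (deriv (deriv q) x * ρ x - q x * deriv (deriv ρ) x) = 0 - 0 := by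
    refine integral_of_hasDerivAt_of_tendsto
      (f := fun x => deriv q x * ρ x - q x * deriv ρ x) (fun x => ?_) (hint3.sub hint1)
      (by simpa using hbot2.sub hbot1) (by simpa using htop2.sub htop1)
    have h := ((hqdiff2 x).hasDerivAt.mul (hρdiff x).hasDerivAt).sub
      ((hqdiff x).hasDerivAt.mul (hρdiff2 x).hasDerivAt)
    convert h using 1
    · rfl
    · ring
  rw [integral_sub hint3 hint1] at key
  have e1 : (fun x => q x * deriv (deriv (fun y => Real.log (ρ y))) x * ρ x)
      = fun x => q x * deriv (deriv ρ) x - q x * (deriv ρ x) ^ 2 / ρ x := by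
    funext x
    have := (hρpos x).ne'
    rw [hlog, hlog2]
    field_simp
  have e2 : (fun x => q x * (deriv (fun y => Real.log (ρ y)) x) ^ 2 * ρ x)
      = fun x => q x * (deriv ρ x) ^ 2 / ρ x := by
    funext x
    have := (hρpos x).ne'
    rw [hlog]
    field_simp
  rw [e1, e2, integral_sub hint1 hint4]
  linarith
end

section
/- For every index i : Fin e and every (x, y) ∈ (Fin d → ℝ) × (Fin e → ℝ), the partial derivative of log g at (x, y) along the i-th coordinate of the y-block equals (∂ log h / ∂ y_i)(y) + ∑_{j : Fin d} ((x j − f j (x, y))/(σ j)²) · (∂ f j / ∂ y_i)(x, y). (Score decomposition with respect to a past-time-step coordinate, the key identity in the proof of Theorem 2 for t′ = t − 1.) -/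
open Real MeasureTheory

/-- Score decomposition with respect to a past-time-step coordinate (key identity in the
proof of Theorem 2 for `t′ = t − 1`): for `g (x, y) = h y · ∏ⱼ N(x j; f j (x,y), σ j²)`,
`∂ log g / ∂ y_i (x, y) = ∂ log h / ∂ y_i (y)
   + ∑ⱼ ((x j − f j (x,y))/(σ j)²) · ∂ f j / ∂ y_i (x, y)`. -/
theorem past_score_decomposition
    (d e : ℕ) (σ : Fin d → ℝ) (hσ : ∀ j, 0 < σ j)
    (f : Fin d → (Fin d → ℝ) × (Fin e → ℝ) → ℝ) (hf : ∀ j, Differentiable ℝ (f j))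
    (h : (Fin e → ℝ) → ℝ) (hh : Differentiable ℝ h) (hhpos : ∀ y, 0 < h y)
    (g : (Fin d → ℝ) × (Fin e → ℝ) → ℝ)
    (hg : ∀ x y, g (x, y) = h y * ∏ j, (σ j * Real.sqrt (2 * π))⁻¹ *
        Real.exp (-(x j - f j (x, y)) ^ 2 / (2 * (σ j) ^ 2))) :
    ∀ (i : Fin e) (x : Fin d → ℝ) (y : Fin e → ℝ),
      deriv (fun t => Real.log (g (x, Function.update y i t))) (y i)
        = deriv (fun t => Real.log (h (Function.update y i t))) (y i)
          + ∑ j, ((x j - f j (x, y)) / (σ j) ^ 2) *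
              deriv (fun t => f j (x, Function.update y i t)) (y i) := by
  intro i x y
  have hu : Differentiable ℝ (fun t : ℝ => Function.update y i t) := by
    intro t
    exact (hasDerivAt_update y i t).differentiableAt
  have hfd : ∀ j, Differentiable ℝ (fun t : ℝ => f j (x, Function.update y i t)) := fun j =>
    (hf j).comp ((differentiable_const x).prodMk hu)
  have hhd : Differentiable ℝ (fun t : ℝ => h (Function.update y i t)) := hh.comp hu
  have hc : ∀ j, 0 < (σ j * Real.sqrt (2 * π))⁻¹ := fun j => by
    have := hσ j
    have := Real.pi_pos
    positivity
  have hlog : (fun t => Real.log (g (x, Function.update y i t))) = fun t =>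
      Real.log (h (Function.update y i t)) + ∑ j, (Real.log ((σ j * Real.sqrt (2 * π))⁻¹) +
        -(x j - f j (x, Function.update y i t)) ^ 2 / (2 * (σ j) ^ 2)) := by
    funext t
    rw [hg, Real.log_mul (hhpos _).ne'
      (Finset.prod_pos fun j _ => mul_pos (hc j) (Real.exp_pos _)).ne',
      Real.log_prod (fun j _ => (mul_pos (hc j) (Real.exp_pos _)).ne')]
    congr 1
    refine Finset.sum_congr rfl fun j _ => ?_
    rw [Real.log_mul (hc j).ne' (Real.exp_pos _).ne', Real.log_exp]
  rw [hlog]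
  have h1 : HasDerivAt (fun t => Real.log (h (Function.update y i t)))
      (deriv (fun t => Real.log (h (Function.update y i t))) (y i)) (y i) :=
    ((hhd (y i)).log (hhpos _).ne').hasDerivAt
  refine (h1.add (HasDerivAt.fun_sum fun j _ => ?_)).deriv
  have h2 := (((((hfd j) (y i)).hasDerivAt.const_sub (x j)).pow 2).neg.div_const
    (2 * (σ j) ^ 2)).const_add (Real.log ((σ j * Real.sqrt (2 * π))⁻¹))
  have hs := (hσ j).ne'
  refine h2.congr_deriv ?_
  simp only [Function.update_eq_self]
  field_simp
  try ring
end
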